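/- arXiv:2504.01727 — 2 statements merged into one kernel-verified Lean document; each statement's English description precedes it below -/
import Mathlib

section
/- Let U ⊆ ℝ³ be open, let X : U → ℝ³ be twice continuously differentiable with covariant basis vectors aᵢ(ξ) = ∂X/∂ξⁱ(ξ) and Jacobian determinant J(ξ) = a₁ ⬝ (a₂ × a₃) ≠ 0 on U, and let M(ξ) be the 3×3 matrix with columns a₂ × a₃, a₃ × a₁, a₁ × a₂. Then for every continuously differentiable vector field f : ℝ³ → ℝ³ and every ξ ∈ U, the divergence transforms as J(ξ) · (∇ ⬝ f)(X(ξ)) = ∇_ξ ⬝ (M(ξ)ᵀ · (f ∘ X))(ξ), where ∇_ξ ⬝ g = ∑ᵢ ∂gᵢ/∂ξⁱ. -/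
open Matrix

/-!
The determinant is an alternating function of the columns `aⱼ` of the Jacobian matrix `DX`, and by
Cramer's rule the `i`-th component of `adj (DX) (f ∘ X)` is the determinant of these columns with
`aᵢ` replaced by `f ∘ X`. In its derivative along the `i`-th axis, the terms differentiating the
other columns are indexed by the `j ≠ i`, and they cancel upon summation over `i`: exchanging `i`
and `j` preserves `∂ᵢ aⱼ = ∂ᵢ ∂ⱼ X` and swaps two columns of the determinant. (For constant `f`
these are the metric identities.) In the remaining terms `aᵢ` is replaced by `∂ᵢ (f ∘ X) = Df aᵢ`,
and their sum is `det (DX) · tr (Df)`. In dimension three the rows of `adj (DX)` are the cross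
products of the `aⱼ`.
-/

section Alternating

variable {R M N ι : Type*} [Semiring R] [AddCommMonoid M] [Module R M] [AddCommMonoid N]
  [Module R N] [DecidableEq ι]

lemma alternating_update_update_add_swap (c : M [⋀^ι]→ₗ[R] N) (a : ι → M) {i j : ι} (hij : i ≠ j)
    (u w : M) :
    c (Function.update (Function.update a i u) j w)
      + c (Function.update (Function.update a j u) i w) = 0 := by
  have hswap : Function.update (Function.update a i u) j w ∘ Equiv.swap i j
      = Function.update (Function.update a j u) i w := by
    rw [Equiv.comp_swap_eq_update, Function.update_self, Function.update_of_ne hij,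
      Function.update_self, Function.update_idem, Function.update_comm hij, Function.update_idem]
  rw [add_comm, ← hswap]
  exact c.map_swap_add _ hij

lemma sum_alternating_update_update_eq_zero [Fintype ι] (c : M [⋀^ι]→ₗ[R] N) (a : ι → M) (u : M)
    {b : ι → ι → M} (hb : ∀ i j, b i j = b j i) :
    ∑ i, ∑ j ∈ {i}ᶜ, c (Function.update (Function.update a i u) j (b i j)) = 0 := by
  rw [Finset.sum_sigma']
  refine Finset.sum_involution (fun p _ => ⟨p.2, p.1⟩) ?_ ?_ ?_ ?_
  · rintro ⟨i, j⟩ hij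
    have hij : i ≠ j := by simpa [eq_comm] using hij
    dsimp only
    rw [hb j i]
    exact alternating_update_update_add_swap c a hij u (b i j)
  · rintro ⟨i, j⟩ hij -
    simpa [eq_comm] using hij
  · rintro ⟨i, j⟩ hij
    simpa [eq_comm] using hij
  · rintro ⟨i, j⟩ -
    rfl

end Alternating

section Piola

variable {𝕜 ι V E G : Type*} [NontriviallyNormedField 𝕜] [Fintype ι] [DecidableEq ι]
  [NormedAddCommGroup V] [NormedSpace 𝕜 V] [NormedAddCommGroup E] [NormedSpace 𝕜 E]
  [NormedAddCommGroup G] [NormedSpace 𝕜 G]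

lemma fderiv_alternating_update (c : E [⋀^ι]→L[𝕜] G) {a : ι → V → E} {a' : ι → V →L[𝕜] E}
    {F : V → E} {F' : V →L[𝕜] E} {x : V} (ha : ∀ j, HasFDerivAt (a j) (a' j) x)
    (hF : HasFDerivAt F F' x) (i : ι) (v : V) :
    fderiv 𝕜 (fun y => c (Function.update (a · y) i (F y))) x v
      = c (Function.update (a · x) i (F' v))
        + ∑ j ∈ {i}ᶜ, c (Function.update (Function.update (a · x) i (F x)) j (a' j v)) := by
  have hupdate (j : ι) : HasFDerivAt (fun y => Function.update (a · y) i (F y) j)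
      (Function.update a' i F' j) x := by
    obtain rfl | hj := eq_or_ne j i
    · simpa only [Function.update_self] using hF
    · simpa only [Function.update_of_ne hj] using ha j
  have hcomp : HasFDerivAt (fun y => c (Function.update (a · y) i (F y))) _ x :=
    HasFDerivAt.multilinear_comp c.toContinuousMultilinearMap hupdate
  have hderiv : fderiv 𝕜 (fun y => c (Function.update (a · y) i (F y))) x v
      = ∑ j, c (Function.update (Function.update (a · x) i (F x)) j
          (Function.update a' i F' j v)) := by
    rw [hcomp.fderiv, _root_.sum_apply]
    rfl
  rw [hderiv, Fintype.sum_eq_add_sum_compl i, Function.update_idem, Function.update_self]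
  congr 1
  refine Finset.sum_congr rfl fun j hj => ?_
  rw [Function.update_of_ne (by simpa using hj)]

lemma sum_fderiv_alternating_update (c : E [⋀^ι]→L[𝕜] G) {X F : V → E} {F' : V →L[𝕜] E} {x : V}
    (hX : DifferentiableAt 𝕜 (fderiv 𝕜 X) x) (hsymm : IsSymmSndFDerivAt 𝕜 X x)
    (hF : HasFDerivAt F F' x) (e : ι → V) :
    ∑ i, fderiv 𝕜 (fun y => c (Function.update (fun j => fderiv 𝕜 X y (e j)) i (F y))) x (e i)
      = ∑ i, c (Function.update (fun j => fderiv 𝕜 X x (e j)) i (F' (e i))) := by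
  have hframe (j : ι) : HasFDerivAt (fun y => fderiv 𝕜 X y (e j))
      ((fderiv 𝕜 (fderiv 𝕜 X) x).flip (e j)) x := by
    simpa using hX.hasFDerivAt.clm_apply (hasFDerivAt_const (e j) x)
  simp only [fderiv_alternating_update c hframe hF, ContinuousLinearMap.flip_apply,
    Finset.sum_add_distrib]
  rw [add_eq_left]
  exact sum_alternating_update_update_eq_zero c.toAlternatingMap _ (F x)
    fun i j => hsymm.eq (e i) (e j)

end Piola

section Determinant

variable {R ι : Type*} [CommRing R] [Fintype ι] [DecidableEq ι]

lemma sum_cramer_mulVec_col (A B : Matrix ι ι R) :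
    ∑ i, A.cramer (B *ᵥ A.col i) i = A.det * B.trace := by
  calc ∑ i, A.cramer (B *ᵥ A.col i) i = (A.adjugate * (B * A)).trace := by
        simp only [cramer_eq_adjugate_mulVec]
        rfl
    _ = (A * A.adjugate * B).trace := by rw [← mul_assoc, trace_mul_comm, mul_assoc]
    _ = A.det * B.trace := by rw [mul_adjugate, smul_mul, one_mul, trace_smul, smul_eq_mul]

lemma adjugate_transpose_fin_three (a : Fin 3 → Fin 3 → R) :
    (of a)ᵀ.adjugate
      = of ![crossProduct (a 1) (a 2), crossProduct (a 2) (a 0), crossProduct (a 0) (a 1)] := by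
  rw [adjugate_fin_three]
  ext i j
  fin_cases i <;> fin_cases j <;> simp [cross_apply] <;> ring

lemma det_transpose_fin_three (a : Fin 3 → Fin 3 → R) :
    (of a)ᵀ.det = a 0 ⬝ᵥ crossProduct (a 1) (a 2) := by
  rw [det_transpose, triple_product_eq_det]
  congr 1
  ext i
  fin_cases i <;> rfl

variable (R ι) in
/-- The determinant as a continuous alternating map of the rows, so that the product rule for
continuous multilinear maps applies to it. -/
def detRowContinuousAlternating [TopologicalSpace R] [IsTopologicalRing R] :
    (ι → R) [⋀^ι]→L[R] R :=
  { detRowAlternating with cont := Continuous.matrix_det continuous_id }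

end Determinant

section Divergence

variable (𝕜 : Type*) {ι : Type*} [NontriviallyNormedField 𝕜] [Fintype ι] [DecidableEq ι]

/-- The divergence `∑ᵢ ∂fᵢ/∂xᵢ` of a vector field in Cartesian coordinates, componentwise: a
component that is not differentiable at `x` contributes `0`. -/
noncomputable def divergence (f : (ι → 𝕜) → ι → 𝕜) (x : ι → 𝕜) : 𝕜 :=
  ∑ i, fderiv 𝕜 (fun y => f y i) x (Pi.single i 1)

/-- The Jacobian matrix `(∂Xᵢ/∂xⱼ)`, whose columns are the covariant basis vectors of the mapping
`X`. It is `0` where `X` is not differentiable. -/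
noncomputable def jacobianMatrix (X : (ι → 𝕜) → ι → 𝕜) (x : ι → 𝕜) : Matrix ι ι 𝕜 :=
  LinearMap.toMatrix' (fderiv 𝕜 X x : (ι → 𝕜) →ₗ[𝕜] ι → 𝕜)

variable {𝕜}

lemma jacobianMatrix_mulVec (X : (ι → 𝕜) → ι → 𝕜) (x v : ι → 𝕜) :
    jacobianMatrix 𝕜 X x *ᵥ v = fderiv 𝕜 X x v :=
  LinearMap.toMatrix'_mulVec _ v

lemma col_jacobianMatrix (X : (ι → 𝕜) → ι → 𝕜) (x : ι → 𝕜) (j : ι) :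
    (jacobianMatrix 𝕜 X x).col j = fderiv 𝕜 X x (Pi.single j 1) := by
  rw [← jacobianMatrix_mulVec, mulVec_single_one]

lemma jacobianMatrix_eq_transpose_of (X : (ι → 𝕜) → ι → 𝕜) (x : ι → 𝕜) :
    jacobianMatrix 𝕜 X x = (of fun j => fderiv 𝕜 X x (Pi.single j 1))ᵀ := by
  simp only [← col_jacobianMatrix]
  rfl

lemma trace_jacobianMatrix {f : (ι → 𝕜) → ι → 𝕜} {x : ι → 𝕜} (hf : DifferentiableAt 𝕜 f x) :
    (jacobianMatrix 𝕜 f x).trace = divergence 𝕜 f x := by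
  refine Finset.sum_congr rfl fun i _ => ?_
  rw [(hasFDerivAt_pi'.1 hf.hasFDerivAt i).fderiv]
  exact congrFun (col_jacobianMatrix f x i) i

lemma cramer_jacobianMatrix (X : (ι → 𝕜) → ι → 𝕜) (x b : ι → 𝕜) (i : ι) :
    (jacobianMatrix 𝕜 X x).cramer b i = detRowContinuousAlternating 𝕜 ι
      (Function.update (fun j => fderiv 𝕜 X x (Pi.single j 1)) i b) := by
  rw [← funext (col_jacobianMatrix X x), cramer_apply, ← det_transpose, ← updateRow_transpose]
  rfl

theorem divergence_transform_general {X f : (ι → 𝕜) → ι → 𝕜} {x : ι → 𝕜}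
    (hX : ContDiffAt 𝕜 (minSmoothness 𝕜 2) X x) (hf : DifferentiableAt 𝕜 f (X x)) :
    (jacobianMatrix 𝕜 X x).det * divergence 𝕜 f (X x)
      = divergence 𝕜 (fun y => (jacobianMatrix 𝕜 X y).adjugate *ᵥ f (X y)) x := by
  have hX2 : ContDiffAt 𝕜 2 X x := hX.of_le le_minSmoothness
  have hDX : DifferentiableAt 𝕜 (fderiv 𝕜 X) x :=
    (hX2.fderiv_right (m := 1) one_add_one_eq_two.le).differentiableAt one_ne_zero
  have hfX : HasFDerivAt (fun y => f (X y)) ((fderiv 𝕜 f (X x)).comp (fderiv 𝕜 X x)) x :=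
    hf.hasFDerivAt.comp x (hX2.differentiableAt two_ne_zero).hasFDerivAt
  symm
  calc divergence 𝕜 (fun y => (jacobianMatrix 𝕜 X y).adjugate *ᵥ f (X y)) x
      = ∑ i, (jacobianMatrix 𝕜 X x).cramer
          (fderiv 𝕜 f (X x) (fderiv 𝕜 X x (Pi.single i 1))) i := by
        simp only [divergence, ← cramer_eq_adjugate_mulVec, cramer_jacobianMatrix]
        exact sum_fderiv_alternating_update _ hDX (hX.isSymmSndFDerivAt le_rfl) hfX _
    _ = (jacobianMatrix 𝕜 X x).det * (jacobianMatrix 𝕜 f (X x)).trace := by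
        simp only [← sum_cramer_mulVec_col, jacobianMatrix_mulVec, col_jacobianMatrix]
    _ = (jacobianMatrix 𝕜 X x).det * divergence 𝕜 f (X x) := by rw [trace_jacobianMatrix hf]

end Divergence

/-- Divergence transformation under a curvilinear mapping:
`J(ξ) · (∇ ⬝ f)(X(ξ)) = ∇_ξ ⬝ (M(ξ)ᵀ (f ∘ X))(ξ)` for `ξ ∈ U`, where `M` has columns
`a₂ × a₃`, `a₃ × a₁`, `a₁ × a₂` and `J = a₁ ⬝ (a₂ × a₃) ≠ 0` on the open set `U`,
and `X` is twice continuously differentiable on `U`. -/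
theorem divergence_transform
    (U : Set (Fin 3 → ℝ)) (hU : IsOpen U)
    (X : (Fin 3 → ℝ) → (Fin 3 → ℝ)) (hX : ContDiffOn ℝ 2 X U)
    (a : Fin 3 → (Fin 3 → ℝ) → (Fin 3 → ℝ))
    (ha : ∀ i ξ, a i ξ = fderiv ℝ X ξ (Pi.single i 1))
    (J : (Fin 3 → ℝ) → ℝ)
    (hJ : ∀ ξ, J ξ = a 0 ξ ⬝ᵥ crossProduct (a 1 ξ) (a 2 ξ))
    (hJ0 : ∀ ξ ∈ U, J ξ ≠ 0)
    (M : (Fin 3 → ℝ) → Matrix (Fin 3) (Fin 3) ℝ)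
    (hM : ∀ ξ, M ξ = Matrix.of fun i j =>
      ![crossProduct (a 1 ξ) (a 2 ξ), crossProduct (a 2 ξ) (a 0 ξ),
        crossProduct (a 0 ξ) (a 1 ξ)] j i)
    (f : (Fin 3 → ℝ) → (Fin 3 → ℝ)) (hf : ContDiff ℝ 1 f)
    (ξ : Fin 3 → ℝ) (hξ : ξ ∈ U) :
    J ξ * (∑ i, fderiv ℝ (fun y => f y i) (X ξ) (Pi.single i 1))
      = ∑ i, fderiv ℝ (fun η => (M η)ᵀ.mulVec (f (X η)) i) ξ (Pi.single i 1) := by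
  have hA (η : Fin 3 → ℝ) : jacobianMatrix ℝ X η = (of fun i => a i η)ᵀ := by
    simp only [jacobianMatrix_eq_transpose_of, ha]
  have hJdet : J ξ = (jacobianMatrix ℝ X ξ).det := by
    rw [hA, det_transpose_fin_three, hJ]
  have hMadj (η : Fin 3 → ℝ) : (M η)ᵀ = (jacobianMatrix ℝ X η).adjugate := by
    rw [hA, adjugate_transpose_fin_three, hM]
    rfl
  have hXξ : ContDiffAt ℝ (minSmoothness ℝ 2) X ξ := by
    simpa only [minSmoothness_of_isRCLikeNormedField] using hX.contDiffAt (hU.mem_nhds hξ)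
  simp only [hJdet, hMadj]
  exact divergence_transform_general hXξ (hf.differentiable one_ne_zero _)
end

section
/- Let u_{nL}, u_{nR} ∈ ℝ, c_{sL}, c_{sR} > 0, ρ_L, ρ_R > 0, set a_L = √(u_{nL}² + 4c_{sL}²), a_R = √(u_{nR}² + 4c_{sR}²), λ_L± = (u_{nL} ± a_L)/2, λ_R± = (u_{nR} ± a_R)/2, and let u* ∈ ℝ. Define ρ_L* = ρ_L λ_L⁺/(u* − λ_L⁻) and ρ_R* = ρ_R λ_R⁻/(u* − λ_R⁺). Then the upwind-selected star density ρ* (equal to ρ_L* if u* ≥ 0 and to ρ_R* if u* < 0) is strictly positive: if u* ≥ 0 then ρ_L* > 0, and if u* < 0 then ρ_R* > 0. -/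
/-! Since `√(u² + 4c²) > |u|` for `c ≠ 0`, the wave speeds satisfy `λ⁻ < 0 < λ⁺` on each side.
The numerator and denominator of `ρ_L*` are therefore both positive as soon as `λ_L⁻ < u*`, and
those of `ρ_R*` are both negative as soon as `u* < λ_R⁺`; the upwind choice by the sign of `u*`
falls within these two ranges. -/

/-- The faster characteristic speed `λ⁺` of a state with normal velocity `u` and sound speed `c`,
i.e. the larger root of `λ² - u λ - c² = 0`. -/
noncomputable def plusWaveSpeed (u c : ℝ) : ℝ := (u + √(u ^ 2 + 4 * c ^ 2)) / 2

/-- The slower characteristic speed `λ⁻` of a state with normal velocity `u` and sound speed `c`,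
i.e. the smaller root of `λ² - u λ - c² = 0`. -/
noncomputable def minusWaveSpeed (u c : ℝ) : ℝ := (u - √(u ^ 2 + 4 * c ^ 2)) / 2

lemma abs_lt_sqrt_sq_add (u : ℝ) {d : ℝ} (hd : 0 < d) : |u| < √(u ^ 2 + d) :=
  Real.lt_sqrt_of_sq_lt <| by rw [sq_abs]; exact lt_add_of_pos_right _ hd

lemma plusWaveSpeed_pos (u : ℝ) {c : ℝ} (hc : c ≠ 0) : 0 < plusWaveSpeed u c := by
  have h : |u| < √(u ^ 2 + 4 * c ^ 2) := abs_lt_sqrt_sq_add u (by positivity)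
  unfold plusWaveSpeed
  linarith [neg_abs_le u]

lemma minusWaveSpeed_neg (u : ℝ) {c : ℝ} (hc : c ≠ 0) : minusWaveSpeed u c < 0 := by
  have h : |u| < √(u ^ 2 + 4 * c ^ 2) := abs_lt_sqrt_sq_add u (by positivity)
  unfold minusWaveSpeed
  linarith [le_abs_self u]

theorem star_density_positive_general {uL uR cL cR ρL ρR us : ℝ}
    (hcL : cL ≠ 0) (hcR : cR ≠ 0) (hρL : 0 < ρL) (hρR : 0 < ρR) :
    (minusWaveSpeed uL cL < us →
      0 < ρL * plusWaveSpeed uL cL / (us - minusWaveSpeed uL cL)) ∧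
    (us < plusWaveSpeed uR cR →
      0 < ρR * minusWaveSpeed uR cR / (us - plusWaveSpeed uR cR)) :=
  ⟨fun hus => div_pos (mul_pos hρL (plusWaveSpeed_pos uL hcL)) (sub_pos.2 hus),
    fun hus => div_pos_of_neg_of_neg
      (mul_neg_of_pos_of_neg hρR (minusWaveSpeed_neg uR hcR)) (sub_neg.2 hus)⟩

/-- Positivity of the upwind-selected star density of the exact Riemann
solver: with `ρ_L* = ρ_L λ_L⁺/(u* − λ_L⁻)` and `ρ_R* = ρ_R λ_R⁻/(u* − λ_R⁺)`, if
`u* ≥ 0` then `ρ_L* > 0`, and if `u* < 0` then `ρ_R* > 0`. -/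
theorem star_density_positive
    (unL unR csL csR ρL ρR : ℝ) (hcsL : 0 < csL) (hcsR : 0 < csR)
    (hρL : 0 < ρL) (hρR : 0 < ρR)
    (aL aR : ℝ)
    (haL : aL = Real.sqrt (unL ^ 2 + 4 * csL ^ 2))
    (haR : aR = Real.sqrt (unR ^ 2 + 4 * csR ^ 2))
    (lLp lLm lRp lRm : ℝ)
    (hlLp : lLp = (unL + aL) / 2) (hlLm : lLm = (unL - aL) / 2)
    (hlRp : lRp = (unR + aR) / 2) (hlRm : lRm = (unR - aR) / 2)
    (us : ℝ)
    (ρLs ρRs : ℝ)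
    (hρLs : ρLs = ρL * lLp / (us - lLm))
    (hρRs : ρRs = ρR * lRm / (us - lRp)) :
    (0 ≤ us → 0 < ρLs) ∧ (us < 0 → 0 < ρRs) := by
  subst hρLs hρRs hlLp hlLm hlRp hlRm haL haR
  obtain ⟨hL, hR⟩ := star_density_positive_general hcsL.ne' hcsR.ne' hρL hρR
  exact ⟨fun hus => hL ((minusWaveSpeed_neg unL hcsL.ne').trans_le hus),
    fun hus => hR (hus.trans (plusWaveSpeed_pos unR hcsR.ne'))⟩
end
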